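/- arXiv:1006.0936 — 3 statements merged into one kernel-verified Lean document; each statement's English description precedes it below -/
import Mathlib

section
/- Let K be an infinite field, A a K-algebra, and M, N two A-modules. Suppose L is an A-submodule of M × N that is invariant under rescaling the second coordinate, i.e., for every nonzero scalar c ∈ K and every (m, n) ∈ L one has (m, c • n) ∈ L. Then L decomposes as a product: L = P.prod Q, where P is the A-submodule {m ∈ M : (m, 0) ∈ L} of M and Q is the A-submodule {n ∈ N : (0, n) ∈ L} of N. -/
/-!
An infinite field has a scalar `c` other than `0` and `1`. For `(m, n) ∈ L`, the difference
`(m, c • n) - (m, n) = (0, (c - 1) • n)` lies in `L`, and rescaling by `(c - 1)⁻¹` puts `(0, n)`,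
hence also `(m, 0)`, in `L`. The reverse inclusion is closure of `L` under addition.
-/

/-- **Fixed-point lemma for submodules of a direct sum.**
Let `K` be an infinite field, `A` a `K`-algebra, and `M, N` two `A`-modules.
If an `A`-submodule `L` of `M × N` is invariant under rescaling the second
coordinate by any nonzero scalar of `K`, then `L = P.prod Q`, where
`P = {m | (m, 0) ∈ L}` and `Q = {n | (0, n) ∈ L}` (realized as the comaps of
`L` along the two canonical inclusions). -/
theorem submodule_prod_of_rescaling_invariant
    (K : Type*) [Field K] [Infinite K]
    (A : Type*) [Ring A] [Algebra K A]
    (M N : Type*) [AddCommGroup M] [AddCommGroup N]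
    [Module A M] [Module A N]
    [Module K N] [IsScalarTower K A N]
    (L : Submodule A (M × N))
    (hL : ∀ c : K, c ≠ 0 → ∀ (m : M) (n : N), (m, n) ∈ L → (m, c • n) ∈ L) :
    L = (L.comap (LinearMap.inl A M N)).prod (L.comap (LinearMap.inr A M N)) := by
  ext ⟨m, n⟩
  simp only [Submodule.mem_prod, Submodule.mem_comap, LinearMap.inl_apply, LinearMap.inr_apply]
  constructor
  · intro h
    classical
    obtain ⟨c, hc⟩ := Infinite.exists_notMem_finset ({0, 1} : Finset K)
    simp only [Finset.mem_insert, Finset.mem_singleton, not_or] at hc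
    have hc1 : c - 1 ≠ 0 := sub_ne_zero.mpr hc.2
    -- Subtracting `(m, n)` from `(m, c • n)` kills `m` and leaves a nonzero multiple of `n`.
    have hsub : ((0 : M), (c - 1) • n) ∈ L := by
      simpa [sub_smul] using L.sub_mem (hL c hc.1 m n h) h
    have hn : ((0 : M), n) ∈ L := by
      simpa [smul_smul, inv_mul_cancel₀ hc1] using hL (c - 1)⁻¹ (inv_ne_zero hc1) 0 _ hsub
    exact ⟨by simpa using L.sub_mem h hn, hn⟩
  · rintro ⟨hm, hn⟩
    simpa using L.add_mem hm hn
end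

section
/- Let K be an infinite field, A a K-algebra, and M, N two A-modules with M × N finite-dimensional over K. The map sending a pair (P, Q), where P is an A-submodule of M and Q is an A-submodule of N, to the A-submodule P.prod Q of M × N, is a bijection from the set of such pairs onto the set of A-submodules L of M × N satisfying: for every nonzero c ∈ K and every (m, n) ∈ L, (m, c • n) ∈ L. Moreover, under this bijection, finrank K (P.prod Q) = finrank K P + finrank K Q. -/
/-!
Fix a scalar `c` different from `0` and `1`. If `L` is invariant under rescaling and `(m, n) ∈ L`,
then `(m, c • n) - (m, n) = (c - 1) • (0, n)` lies in `L`, hence so do `(0, n)` and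
`(m, 0) = (m, n) - (0, n)`. So `L` is the product of its preimages under the two inclusions.
The dimension formula comes from the `K`-linear identification of `P.prod Q` with `P × Q`.
-/

/-- **Fixed points of the `Kˣ`-action on submodules of `M × N`.**
Let `K` be an infinite field, `A` a `K`-algebra, and `M, N` two `A`-modules with
`M × N` finite-dimensional over `K`.  The map `(P, Q) ↦ P.prod Q` is a bijection
from pairs of `A`-submodules of `M` and `N` onto the set of `A`-submodules `L` of
`M × N` invariant under rescaling the second coordinate by nonzero scalars of `K`;
moreover `finrank K (P.prod Q) = finrank K P + finrank K Q`. -/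
theorem submodule_prod_bijOn_rescaling_invariant
    (K : Type*) [Field K] [Infinite K]
    (A : Type*) [Ring A] [Algebra K A]
    (M N : Type*) [AddCommGroup M] [AddCommGroup N]
    [Module A M] [Module A N]
    [Module K M] [Module K N]
    [IsScalarTower K A M] [IsScalarTower K A N]
    [FiniteDimensional K (M × N)] :
    Set.BijOn (fun PQ : Submodule A M × Submodule A N => PQ.1.prod PQ.2)
        Set.univ
        {L : Submodule A (M × N) |
          ∀ c : K, c ≠ 0 → ∀ (m : M) (n : N), (m, n) ∈ L → (m, c • n) ∈ L} ∧
      ∀ (P : Submodule A M) (Q : Submodule A N),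
        Module.finrank K (P.prod Q) = Module.finrank K P + Module.finrank K Q := by
  refine ⟨⟨?_, ?_, ?_⟩, ?_⟩
  · rintro ⟨P, Q⟩ - c - m n ⟨hm, hn⟩
    exact ⟨hm, Q.smul_of_tower_mem c hn⟩
  · rintro ⟨P, Q⟩ - ⟨P', Q'⟩ - h
    have h' : ∀ (m : M) (n : N), m ∈ P ∧ n ∈ Q ↔ m ∈ P' ∧ n ∈ Q' := fun m n =>
      SetLike.ext_iff.mp h (m, n)
    refine Prod.ext (Submodule.ext fun m => ?_) (Submodule.ext fun n => ?_)
    · simpa using h' m 0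
    · simpa using h' 0 n
  · intro L hL
    obtain ⟨c, hc⟩ := (Set.toFinite ({0, 1} : Set K)).exists_notMem
    obtain ⟨hc0, hc1⟩ : c ≠ 0 ∧ c ≠ 1 := by simpa using hc
    have key : ∀ (m : M) (n : N), (m, n) ∈ L → ((0 : M), n) ∈ L := fun m n h => by
      have h1 := L.smul_of_tower_mem (c - 1)⁻¹ (L.sub_mem (hL c hc0 m n h) h)
      have h2 : (c - 1)⁻¹ • (c • n - n) = n := by
        rw [show c • n - n = (c - 1) • n by rw [sub_smul, one_smul], smul_smul, inv_mul_cancel₀ (sub_ne_zero.mpr hc1), one_smul]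
      simpa [h2] using h1
    refine ⟨(L.comap (LinearMap.inl A M N), L.comap (LinearMap.inr A M N)), Set.mem_univ _, ?_⟩
    ext ⟨m, n⟩
    change (m, (0 : N)) ∈ L ∧ ((0 : M), n) ∈ L ↔ (m, n) ∈ L
    constructor
    · rintro ⟨hm, hn⟩
      simpa using L.add_mem hm hn
    · intro h
      exact ⟨by simpa using L.sub_mem h (key m n h), key m n h⟩
  · intro P Q
    have : Module.Finite K M :=
      Module.Finite.of_surjective (LinearMap.fst K M N) LinearMap.fst_surjective
    have : Module.Finite K N :=
      Module.Finite.of_surjective (LinearMap.snd K M N) LinearMap.snd_surjective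
    have : Module.Finite K P :=
      inferInstanceAs (Module.Finite K (P.restrictScalars K))
    have : Module.Finite K Q :=
      inferInstanceAs (Module.Finite K (Q.restrictScalars K))
    let e : P.prod Q ≃ₗ[K] P × Q :=
      { toFun := fun x => (⟨x.1.1, x.2.1⟩, ⟨x.1.2, x.2.2⟩)
        invFun := fun y => ⟨(y.1.1, y.2.1), y.1.2, y.2.2⟩
        left_inv := fun _ => rfl
        right_inv := fun _ => rfl
        map_add' := fun _ _ => rfl
        map_smul' := fun _ _ => rfl }
    rw [e.finrank_eq, Module.finrank_prod]
end

section
/- Let G be a finite simple graph on vertex set Fin n, and let σ, τ : Fin n → Fin n be two permutations (linear orderings of the vertices). Suppose σ and τ induce the same orientation of G, i.e., for every edge {a, b} of G, a precedes b in σ exactly when a precedes b in τ. Then τ can be obtained from σ by a finite sequence of adjacent transpositions, each of which swaps two consecutive vertices that are not joined by an edge of G. -/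
/-!
Bubble sort. Call a pair `(a, b)` of vertices a disagreement if `a` precedes `b` in `σ` but `b`
precedes `a` in `τ`. If every two `σ`-consecutive vertices are in the same order in `τ`, then
`τ⁻¹ ∘ σ` is strictly increasing, hence the identity (`eq_of_forall_consecutive_lt`). Otherwise
some consecutive pair is a disagreement; it is not an edge, because edges are ordered alike by `σ`
and `τ`. Swapping it changes the relative order of that pair only (`swap_succ_lt_swap_succ`), so
the induced orientation is kept and exactly this disagreement is removed. Induct on the number of
disagreements.
-/

/-- The pairs of vertices that `σ` and `τ` order oppositely, listed in the order of `σ`. -/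
def disagreements {n : ℕ} (σ τ : Equiv.Perm (Fin n)) : Finset (Fin n × Fin n) :=
  Finset.univ.filter fun p => σ.symm p.1 < σ.symm p.2 ∧ τ.symm p.2 < τ.symm p.1

/-- An adjacent transposition preserves the order of every pair of positions other than the
transposed one. -/
theorem swap_succ_lt_swap_succ {n k : ℕ} (h₀ : k < n) (hk : k + 1 < n) (x y : Fin n)
    (h₁ : ¬ (x = ⟨k, h₀⟩ ∧ y = ⟨k + 1, hk⟩)) (h₂ : ¬ (x = ⟨k + 1, hk⟩ ∧ y = ⟨k, h₀⟩)) :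
    Equiv.swap ⟨k, h₀⟩ ⟨k + 1, hk⟩ x < Equiv.swap ⟨k, h₀⟩ ⟨k + 1, hk⟩ y ↔ x < y := by
  simp only [Equiv.swap_apply_def, Fin.ext_iff, Fin.lt_def] at *
  split_ifs <;> simp only <;> omega

theorem eq_of_forall_consecutive_lt {n : ℕ} (σ τ : Equiv.Perm (Fin n))
    (h : ∀ (k : ℕ) (hk : k + 1 < n),
      τ.symm (σ ⟨k, Nat.lt_of_succ_lt hk⟩) < τ.symm (σ ⟨k + 1, hk⟩)) : σ = τ := by
  cases n with
  | zero => exact Subsingleton.elim _ _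
  | succ m =>
    have hmono : StrictMono (σ.trans τ.symm) :=
      Fin.strictMono_iff_lt_succ.2 fun i => h i (by omega)
    have hid : hmono.orderIsoOfSurjective _ (σ.trans τ.symm).surjective = OrderIso.refl _ :=
      Subsingleton.elim _ _
    ext1 x
    have hx : τ.symm (σ x) = x := DFunLike.congr_fun hid x
    exact (Equiv.symm_apply_eq τ).1 hx

theorem perm_reflTransGen_of_same_orientation
    {n : ℕ} (G : SimpleGraph (Fin n)) (σ τ : Equiv.Perm (Fin n))
    (h : ∀ a b : Fin n, G.Adj a b → (σ.symm a < σ.symm b ↔ τ.symm a < τ.symm b)) :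
    Relation.ReflTransGen
      (fun ρ ρ' : Equiv.Perm (Fin n) => ∃ (k : ℕ) (hk : k + 1 < n),
        ¬ G.Adj (ρ ⟨k, Nat.lt_of_succ_lt hk⟩) (ρ ⟨k + 1, hk⟩) ∧
          ρ' = ρ * Equiv.swap ⟨k, Nat.lt_of_succ_lt hk⟩ ⟨k + 1, hk⟩)
      σ τ := by
  induction hc : (disagreements σ τ).card using Nat.strong_induction_on generalizing σ with
  | _ c ih =>
  subst hc
  by_cases hs : ∀ (k : ℕ) (hk : k + 1 < n),
      τ.symm (σ ⟨k, Nat.lt_of_succ_lt hk⟩) < τ.symm (σ ⟨k + 1, hk⟩)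
  · rw [eq_of_forall_consecutive_lt σ τ hs]
  push Not at hs
  obtain ⟨k, hk, hle⟩ := hs
  have h₀ : k < n := Nat.lt_of_succ_lt hk
  have hlt : τ.symm (σ ⟨k + 1, hk⟩) < τ.symm (σ ⟨k, h₀⟩) :=
    lt_of_le_of_ne hle (by simp)
  have hnadj : ¬ G.Adj (σ ⟨k, h₀⟩) (σ ⟨k + 1, hk⟩) := fun hadj =>
    hle.not_gt ((h _ _ hadj).1 (by simp))
  have hsymm : ∀ a, Equiv.symm (σ * Equiv.swap (⟨k, h₀⟩ : Fin n) ⟨k + 1, hk⟩) a =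
      Equiv.swap ⟨k, h₀⟩ ⟨k + 1, hk⟩ (σ.symm a) := fun _ => rfl
  refine Relation.ReflTransGen.head ⟨k, hk, hnadj, rfl⟩ (ih _ ?_ _ ?_ rfl)
  · refine Finset.card_lt_card (Finset.ssubset_iff_of_subset ?_ |>.2
      ⟨(σ ⟨k, h₀⟩, σ ⟨k + 1, hk⟩), ?_, ?_⟩)
    · rintro ⟨a, b⟩ hab
      simp only [disagreements, Finset.mem_filter, Finset.mem_univ, true_and, hsymm] at hab ⊢
      refine ⟨?_, hab.2⟩
      by_cases h₂ : σ.symm a = ⟨k + 1, hk⟩ ∧ σ.symm b = ⟨k, h₀⟩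
      · -- The swapped pair, now listed in its new order, agrees with `τ`.
        rw [Equiv.symm_apply_eq, Equiv.symm_apply_eq] at h₂
        rw [h₂.1, h₂.2] at hab
        exact absurd hab.2 hlt.not_gt
      by_cases h₁ : σ.symm a = ⟨k, h₀⟩ ∧ σ.symm b = ⟨k + 1, hk⟩
      · simp [h₁.1, h₁.2]
      exact (swap_succ_lt_swap_succ h₀ hk _ _ h₁ h₂).1 hab.1
    · simp [disagreements, hlt]
    · simp [disagreements, hsymm]
  · intro a b hab
    rw [← h a b hab, hsymm, hsymm]
    apply swap_succ_lt_swap_succ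
    · rw [Equiv.symm_apply_eq, Equiv.symm_apply_eq]
      rintro ⟨rfl, rfl⟩
      exact hnadj hab
    · rw [Equiv.symm_apply_eq, Equiv.symm_apply_eq]
      rintro ⟨rfl, rfl⟩
      exact hnadj hab.symm
end
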